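/- Let y ∈ L¹(0,1) and suppose x ∈ Ω(y) satisfies: for every t ∈ (0,1), either λ(t; x) = λ(t; y), or λ(t; x) ≠ λ(t; y), the level set {u : x(u) = λ(t; x)} is an atom of Lebesgue measure restricted appropriately — which is impossible in the atomless case. Conclude: if (0,1) carries Lebesgue measure (atomless), then x ∈ Ω(y) is an extreme point of Ω(y) if and only if λ(x) = λ(y). -/

import Mathlib

open MeasureTheory Set

/-- The decreasing rearrangement (spectral scale) of `f` on `(0,1)`. -/
noncomputable def rr (f : ℝ → ℝ) (t : ℝ) : ℝ :=
  sInf {s : ℝ | volume {u ∈ Ioo (0:ℝ) 1 | s < f u} ≤ ENNReal.ofReal t}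

/-- Hardy–Littlewood–Pólya majorisation `g ≺ f` on `(0,1)`. -/
def Maj (g f : ℝ → ℝ) : Prop :=
  (∀ s ∈ Ico (0:ℝ) 1, (∫ t in Ioo (0:ℝ) s, rr g t) ≤ ∫ t in Ioo (0:ℝ) s, rr f t) ∧
    (∫ t in Ioo (0:ℝ) 1, rr g t) = ∫ t in Ioo (0:ℝ) 1, rr f t

/-- The orbit `Ω(y)` of all integrable functions on `(0,1)` majorised by `y`. -/
def Omega (y : ℝ → ℝ) : Set (ℝ → ℝ) :=
  {x | IntegrableOn x (Ioo (0:ℝ) 1) ∧ Maj x y}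

/-- `x` is an extreme point of the convex set `Ω` (functions identified a.e. on `(0,1)`). -/
def ExtremePt (Ω : Set (ℝ → ℝ)) (x : ℝ → ℝ) : Prop :=
  x ∈ Ω ∧ ∀ x₁ ∈ Ω, ∀ x₂ ∈ Ω,
    (∀ᵐ u ∂(volume.restrict (Ioo (0:ℝ) 1)), x u = (x₁ u + x₂ u) / 2) →
    (∀ᵐ u ∂(volume.restrict (Ioo (0:ℝ) 1)), x₁ u = x₂ u)

open Filter Topology ProbabilityTheory

/-- Lebesgue measure on `(0,1)`. -/
noncomputable abbrev unitVol : Measure ℝ := volume.restrict (Ioo (0:ℝ) 1)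

instance : IsProbabilityMeasure unitVol := ⟨by simp [unitVol]⟩

/-- The distribution function `s ↦ m({f > s})` on `(0,1)`. -/
noncomputable def tail (f : ℝ → ℝ) (s : ℝ) : ℝ := unitVol.real {u | s < f u}

/-- The integrated tail `∫ (f - c)⁺` over `(0,1)`. -/
noncomputable def excess (f : ℝ → ℝ) (c : ℝ) : ℝ := ∫ u in Ioo (0:ℝ) 1, max (f u - c) 0

lemma rr_eq_sInf_tail (f : ℝ → ℝ) {t : ℝ} (ht : 0 ≤ t) :
    rr f t = sInf {s | tail f s ≤ t} := by
  unfold rr tail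
  congr 1
  ext s
  have h : volume {u ∈ Ioo (0:ℝ) 1 | s < f u} = unitVol {u | s < f u} := by
    rw [unitVol, Measure.restrict_apply' measurableSet_Ioo, inter_comm]; rfl
  simp only [mem_ofPred_eq, h]
  rw [ENNReal.le_ofReal_iff_toReal_le (measure_ne_top _ _) ht]
  rfl

lemma tail_eq_one_sub_cdf {f : ℝ → ℝ} (hf : AEMeasurable f unitVol) (s : ℝ) :
    tail f s = 1 - cdf (unitVol.map f) s := by
  have := Measure.isProbabilityMeasure_map hf
  rw [cdf_eq_real, ← probReal_compl_eq_one_sub measurableSet_Iic, compl_Iic, tail, measureReal_def,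
    measureReal_def, Measure.map_apply_of_aemeasurable hf measurableSet_Ioi]
  rfl

lemma tail_antitone (f : ℝ → ℝ) : Antitone (tail f) := fun _ _ h =>
  measureReal_mono (fun _ hu => lt_of_le_of_lt h hu)

lemma tail_nonneg (f : ℝ → ℝ) (s : ℝ) : 0 ≤ tail f s := measureReal_nonneg

lemma tail_le_one (f : ℝ → ℝ) (s : ℝ) : tail f s ≤ 1 := measureReal_le_one

lemma lt_rr_iff {f : ℝ → ℝ} (hf : AEMeasurable f unitVol) {t : ℝ} (ht : t ∈ Ioo (0:ℝ) 1) (s : ℝ) :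
    s < rr f t ↔ t < tail f s := by
  have := Measure.isProbabilityMeasure_map hf
  rw [rr_eq_sInf_tail f ht.1.le]
  have hne : {s | tail f s ≤ t}.Nonempty := by
    obtain ⟨s, hs⟩ := ((tendsto_cdf_atTop (unitVol.map f)).eventually
      (lt_mem_nhds (show 1 - t < 1 by linarith [ht.1]))).exists
    exact ⟨s, by rw [mem_ofPred_eq, tail_eq_one_sub_cdf hf]; linarith⟩
  have hbdd : BddBelow {s | tail f s ≤ t} := by
    obtain ⟨s, hs⟩ := ((tendsto_cdf_atBot (unitVol.map f)).eventually
      (gt_mem_nhds (show 0 < 1 - t by linarith [ht.2]))).exists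
    refine ⟨s, fun r hr => ?_⟩
    by_contra! hlt
    have h1 := tail_antitone f hlt.le
    rw [tail_eq_one_sub_cdf hf s] at h1
    have : tail f r ≤ t := hr
    linarith
  constructor
  · intro h
    by_contra! hle
    exact absurd (csInf_le hbdd hle) (not_le.2 h)
  · intro h
    rw [tail_eq_one_sub_cdf hf] at h
    have hc := ((cdf (unitVol.map f)).right_continuous s).mono Ioi_subset_Ici_self
    obtain ⟨r, hr, hsr⟩ := ((hc.eventually
      (gt_mem_nhds (show cdf (unitVol.map f) s < 1 - t by linarith))).and
        self_mem_nhdsWithin).exists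
    refine lt_of_lt_of_le hsr (le_csInf hne fun q hq => ?_)
    by_contra! hlt
    have h1 := tail_antitone f hlt.le
    rw [tail_eq_one_sub_cdf hf r] at h1
    have : tail f q ≤ t := hq
    linarith

lemma antitoneOn_rr {f : ℝ → ℝ} (hf : AEMeasurable f unitVol) :
    AntitoneOn (rr f) (Ioo (0:ℝ) 1) := by
  intro a ha b hb hab
  refine le_of_forall_lt fun s hs => ?_
  rw [lt_rr_iff hf ha]
  exact hab.trans_lt ((lt_rr_iff hf hb s).1 hs)

lemma aemeasurable_rr {f : ℝ → ℝ} (hf : AEMeasurable f unitVol) : AEMeasurable (rr f) unitVol :=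
  aemeasurable_restrict_of_antitoneOn measurableSet_Ioo (antitoneOn_rr hf)

lemma tail_rr {f : ℝ → ℝ} (hf : AEMeasurable f unitVol) (s : ℝ) : tail (rr f) s = tail f s := by
  have h : {u | s < rr f u} ∩ Ioo (0:ℝ) 1 = Ioo 0 (tail f s) := by
    ext u
    constructor
    · rintro ⟨h1, h2⟩
      exact ⟨h2.1, (lt_rr_iff hf h2 s).1 h1⟩
    · rintro ⟨h1, h2⟩
      have hu : u ∈ Ioo (0:ℝ) 1 := ⟨h1, h2.trans_le (tail_le_one f s)⟩
      exact ⟨(lt_rr_iff hf hu s).2 h2, hu⟩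
  rw [tail, measureReal_def, unitVol, Measure.restrict_apply' measurableSet_Ioo, h]
  simp [tail_nonneg]

lemma identDistrib_of_tail_eq {f g : ℝ → ℝ} (hf : AEMeasurable f unitVol)
    (hg : AEMeasurable g unitVol) (h : ∀ s, tail f s = tail g s) :
    IdentDistrib f g unitVol unitVol := by
  have := Measure.isProbabilityMeasure_map hf
  have := Measure.isProbabilityMeasure_map hg
  refine ⟨hf, hg, Measure.eq_of_cdf _ _ ?_⟩
  ext s
  have := h s
  rw [tail_eq_one_sub_cdf hf, tail_eq_one_sub_cdf hg] at this
  linarith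

lemma identDistrib_rr {f : ℝ → ℝ} (hf : AEMeasurable f unitVol) :
    IdentDistrib (rr f) f unitVol unitVol :=
  identDistrib_of_tail_eq (aemeasurable_rr hf) hf (tail_rr hf)

lemma integrable_max_sub {f : ℝ → ℝ} (hf : Integrable f unitVol) (c : ℝ) :
    Integrable (fun u => max (f u - c) 0) unitVol :=
  (hf.sub (integrable_const c)).pos_part

lemma excess_rr {f : ℝ → ℝ} (hf : AEMeasurable f unitVol) (c : ℝ) :
    excess (rr f) c = excess f c :=
  ((identDistrib_rr hf).comp (u := fun v => max (v - c) 0) (by fun_prop)).integral_eq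

lemma integrable_rr {f : ℝ → ℝ} (hf : Integrable f unitVol) : Integrable (rr f) unitVol :=
  (identDistrib_rr hf.aemeasurable).integrable_iff.2 hf

lemma integral_rr {f : ℝ → ℝ} (hf : AEMeasurable f unitVol) :
    ∫ t in Ioo (0:ℝ) 1, rr f t = ∫ t in Ioo (0:ℝ) 1, f t :=
  (identDistrib_rr hf).integral_eq

lemma integral_rr_sub_const {f : ℝ → ℝ} (hf : Integrable f unitVol) (c : ℝ) {s : ℝ}
    (hs : s ∈ Icc (0:ℝ) 1) :
    ∫ t in Ioo 0 s, (rr f t - c) = (∫ t in Ioo 0 s, rr f t) - c * s := by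
  have hi : IntegrableOn (rr f) (Ioo 0 s) :=
    IntegrableOn.mono_set (integrable_rr hf) (Ioo_subset_Ioo_right hs.2)
  rw [integral_sub hi (integrable_const c)]
  simp [hs.1, mul_comm]

lemma integral_rr_le_excess {f : ℝ → ℝ} (hf : Integrable f unitVol) (c : ℝ) {s : ℝ}
    (hs : s ∈ Icc (0:ℝ) 1) : ∫ t in Ioo 0 s, rr f t ≤ excess f c + c * s := by
  have hsub : Ioo 0 s ⊆ Ioo (0:ℝ) 1 := Ioo_subset_Ioo_right hs.2
  have hm := integrable_max_sub (integrable_rr hf) c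
  have hi : IntegrableOn (rr f) (Ioo 0 s) := IntegrableOn.mono_set (integrable_rr hf) hsub
  have h1 : ∫ t in Ioo 0 s, (rr f t - c) ≤ ∫ t in Ioo 0 s, max (rr f t - c) 0 :=
    integral_mono (hi.sub (integrable_const c)) (IntegrableOn.mono_set hm hsub)
      fun t => le_max_left _ _
  have h2 : ∫ t in Ioo 0 s, max (rr f t - c) 0 ≤ excess (rr f) c :=
    setIntegral_mono_set hm (Eventually.of_forall fun t => le_max_right _ _)
      hsub.eventuallyLE
  rw [excess_rr hf.aemeasurable] at h2
  rw [integral_rr_sub_const hf c hs] at h1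
  linarith

lemma integral_rr_eq_excess {f : ℝ → ℝ} (hf : Integrable f unitVol) {c s : ℝ}
    (hs : s ∈ Icc (0:ℝ) 1) (hlt : ∀ t ∈ Ioo (0:ℝ) 1, t < s → c ≤ rr f t)
    (hgt : ∀ t ∈ Ioo (0:ℝ) 1, s ≤ t → rr f t ≤ c) :
    ∫ t in Ioo 0 s, rr f t = excess f c + c * s := by
  have hsub : Ioo 0 s ⊆ Ioo (0:ℝ) 1 := Ioo_subset_Ioo_right hs.2
  have h2 : excess (rr f) c = ∫ t in Ioo 0 s, (rr f t - c) := by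
    have h : ∫ t in Ioo 0 s, max (rr f t - c) 0 = ∫ t in Ioo 0 s, (rr f t - c) :=
      setIntegral_congr_fun measurableSet_Ioo
        fun t ht => max_eq_left (sub_nonneg.2 (hlt t (hsub ht) ht.2))
    rw [excess, ← h]
    refine setIntegral_eq_of_subset_of_forall_sdiff_eq_zero measurableSet_Ioo hsub ?_
    rintro t ⟨ht, hts⟩
    refine max_eq_right (sub_nonpos.2 (hgt t ht ?_))
    by_contra! h
    exact hts ⟨ht.1, h⟩
  rw [excess_rr hf.aemeasurable, integral_rr_sub_const hf c hs] at h2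
  linarith

lemma maj_iff_excess_le {f g : ℝ → ℝ} (hf : Integrable f unitVol) (hg : Integrable g unitVol) :
    Maj g f ↔ (∀ c, excess g c ≤ excess f c) ∧
      ∫ t in Ioo (0:ℝ) 1, g t = ∫ t in Ioo (0:ℝ) 1, f t := by
  unfold Maj
  rw [integral_rr hf.aemeasurable, integral_rr hg.aemeasurable]
  refine and_congr_left fun hint => ⟨fun h c => ?_, fun h s hs => ?_⟩
  · have hs : tail g c ∈ Icc (0:ℝ) 1 := ⟨tail_nonneg g c, tail_le_one g c⟩
    have h1 := integral_rr_eq_excess hg hs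
      (fun t ht h => ((lt_rr_iff hg.aemeasurable ht c).2 h).le)
      (fun t ht h => not_lt.1 fun h' => not_lt.2 h ((lt_rr_iff hg.aemeasurable ht c).1 h'))
    have h2 := integral_rr_le_excess hf c hs
    have h3 : ∫ t in Ioo 0 (tail g c), rr g t ≤ ∫ t in Ioo 0 (tail g c), rr f t := by
      rcases hs.2.lt_or_eq with h' | h'
      · exact h _ ⟨hs.1, h'⟩
      · rw [h', integral_rr hf.aemeasurable, integral_rr hg.aemeasurable, hint]
    linarith
  · rcases hs.1.eq_or_lt with rfl | h0
    · simp
    have hs' : s ∈ Ioo (0:ℝ) 1 := ⟨h0, hs.2⟩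
    have h1 := integral_rr_eq_excess (c := rr f s) hf ⟨hs.1, hs.2.le⟩
      (fun t ht h => antitoneOn_rr hf.aemeasurable ht hs' h.le)
      (fun t ht h => antitoneOn_rr hf.aemeasurable hs' ht h)
    have h2 := integral_rr_le_excess hg (rr f s) ⟨hs.1, hs.2.le⟩
    linarith [h (rr f s)]

lemma mul_tail_le_excess_sub_le {f : ℝ → ℝ} (hf : Integrable f unitVol) (c : ℝ) {ε : ℝ}
    (hε : 0 < ε) :
    ε * tail f (c + ε) ≤ excess f c - excess f (c + ε) ∧
      excess f c - excess f (c + ε) ≤ ε * tail f c := by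
  have hn (s : ℝ) : NullMeasurableSet {u | s < f u} unitVol :=
    nullMeasurableSet_lt aemeasurable_const hf.aemeasurable
  have hi (s : ℝ) : Integrable ({u | s < f u}.indicator fun _ => ε) unitVol :=
    (integrable_const ε).indicator₀ (hn s)
  have ht (s : ℝ) : ε * tail f s = ∫ u, {u | s < f u}.indicator (fun _ => ε) u ∂unitVol := by
    rw [integral_indicator₀ (hn s), setIntegral_const, smul_eq_mul, mul_comm, tail]
  have hd := (integrable_max_sub hf c).sub (integrable_max_sub hf (c + ε))
  unfold excess
  rw [← integral_sub (integrable_max_sub hf c) (integrable_max_sub hf (c + ε)), ht, ht]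
  constructor
  · refine integral_mono (hi _) hd fun u => ?_
    simp only [indicator, mem_ofPred_eq]
    rcases max_cases (f u - c) 0 with h1 | h1 <;>
      rcases max_cases (f u - (c + ε)) 0 with h2 | h2 <;>
      split_ifs <;> linarith
  · refine integral_mono hd (hi _) fun u => ?_
    simp only [indicator, mem_ofPred_eq]
    rcases max_cases (f u - c) 0 with h1 | h1 <;>
      rcases max_cases (f u - (c + ε)) 0 with h2 | h2 <;>
      split_ifs <;> linarith

lemma tail_le_of_excess_eq {f g : ℝ → ℝ} (hf : Integrable f unitVol) (hg : Integrable g unitVol)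
    (h : ∀ c, excess f c = excess g c) (c : ℝ) : tail f c ≤ tail g c := by
  have hc : ContinuousWithinAt (tail f) (Ioi c) c := by
    rw [funext (tail_eq_one_sub_cdf hf.aemeasurable)]
    exact continuousWithinAt_const.sub
      (((cdf (unitVol.map f)).right_continuous c).mono Ioi_subset_Ici_self)
  refine le_of_tendsto hc ?_
  filter_upwards [self_mem_nhdsWithin] with r hr
  have hε : 0 < r - c := sub_pos.2 hr
  have h1 := (mul_tail_le_excess_sub_le hf c hε).1
  have h2 := (mul_tail_le_excess_sub_le hg c hε).2
  rw [add_sub_cancel] at h1 h2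
  rw [h, h] at h1
  exact le_of_mul_le_mul_left (h1.trans h2) hε

lemma rr_eq_of_excess_eq {f g : ℝ → ℝ} (hf : Integrable f unitVol) (hg : Integrable g unitVol)
    (h : ∀ c, excess f c = excess g c) {t : ℝ} (ht : 0 ≤ t) : rr f t = rr g t := by
  rw [rr_eq_sInf_tail f ht, rr_eq_sInf_tail g ht, funext fun c =>
    (tail_le_of_excess_eq hf hg h c).antisymm (tail_le_of_excess_eq hg hf (fun c => (h c).symm) c)]

lemma excess_eq_of_rr_eq {f g : ℝ → ℝ} (hf : AEMeasurable f unitVol) (hg : AEMeasurable g unitVol)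
    (h : ∀ t ∈ Ioo (0:ℝ) 1, rr f t = rr g t) (c : ℝ) : excess f c = excess g c := by
  rw [← excess_rr hf, ← excess_rr hg]
  exact setIntegral_congr_fun measurableSet_Ioo fun t ht => by simp only [h t ht]

/-- If `x` is a midpoint of `x₁` and `x₂` whose excesses do not exceed that of `x`, then the
midpoint is trivial. -/
lemma ae_eq_of_midpoint {x x₁ x₂ : ℝ → ℝ} (hx : Integrable x unitVol) (h₁ : Integrable x₁ unitVol)
    (h₂ : Integrable x₂ unitVol) (hm : ∀ᵐ u ∂unitVol, x u = (x₁ u + x₂ u) / 2)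
    (e₁ : ∀ c, excess x₁ c ≤ excess x c) (e₂ : ∀ c, excess x₂ c ≤ excess x c) :
    ∀ᵐ u ∂unitVol, x₁ u = x₂ u := by
  have key (c : ℝ) : ∀ᵐ u ∂unitVol,
      (max (x₁ u - c) 0 + max (x₂ u - c) 0) / 2 - max (x u - c) 0 = 0 := by
    have i₁ := integrable_max_sub h₁ c
    have i₂ := integrable_max_sub h₂ c
    have i := integrable_max_sub hx c
    have hnn : ∀ᵐ u ∂unitVol,
        0 ≤ (max (x₁ u - c) 0 + max (x₂ u - c) 0) / 2 - max (x u - c) 0 := by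
      filter_upwards [hm] with u hu
      rw [hu]
      rcases max_cases (x₁ u - c) 0 with h1 | h1 <;> rcases max_cases (x₂ u - c) 0 with h2 | h2 <;>
        rcases max_cases ((x₁ u + x₂ u) / 2 - c) 0 with h3 | h3 <;> linarith
    have ia : Integrable (fun u => (max (x₁ u - c) 0 + max (x₂ u - c) 0) / 2) unitVol :=
      (i₁.add i₂).div_const 2
    refine (integral_eq_zero_iff_of_nonneg_ae hnn (ia.sub i)).1 ?_
    refine le_antisymm ?_ (integral_nonneg_of_ae hnn)
    rw [integral_sub ia i, integral_div, integral_add i₁ i₂]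
    have a₁ := e₁ c
    have a₂ := e₂ c
    unfold excess at a₁ a₂
    linarith
  filter_upwards [hm, ae_all_iff.2 fun q : ℚ => key q] with u hu hq
  rw [hu] at hq
  by_contra hne
  rcases lt_or_gt_of_ne hne with hlt | hlt <;> obtain ⟨q, hq1, hq2⟩ := exists_rat_btwn hlt <;>
  · have := hq q
    rcases max_cases (x₁ u - q) 0 with h1 | h1 <;> rcases max_cases (x₂ u - q) 0 with h2 | h2 <;>
      rcases max_cases ((x₁ u + x₂ u) / 2 - q) 0 with h3 | h3 <;> linarith

lemma abs_excess_sub_le {f g : ℝ → ℝ} (hf : Integrable f unitVol) (hg : Integrable g unitVol)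
    {a b δ : ℝ} (h : ∀ u, |(f u - a) - (g u - b)| ≤ δ) : |excess f a - excess g b| ≤ δ := by
  unfold excess
  rw [← integral_sub (integrable_max_sub hf a) (integrable_max_sub hg b), ← Real.norm_eq_abs]
  refine (norm_integral_le_of_norm_le_const (C := δ) (Eventually.of_forall fun u => ?_)).trans ?_
  · exact (abs_max_sub_max_le_abs _ _ _).trans (h u)
  · simp

lemma continuous_excess {f : ℝ → ℝ} (hf : Integrable f unitVol) : Continuous (excess f) := by
  refine LipschitzWith.continuous (K := 1) (LipschitzWith.of_dist_le_mul fun a b => ?_)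
  rw [Real.dist_eq, Real.dist_eq, NNReal.coe_one, one_mul]
  refine abs_excess_sub_le hf hf fun u => ?_
  rw [sub_sub_sub_cancel_left, abs_sub_comm]

lemma tendsto_excess_atTop {f : ℝ → ℝ} (hf : Integrable f unitVol) :
    Tendsto (excess f) atTop (𝓝 0) := by
  have h := tendsto_integral_filter_of_dominated_convergence (μ := unitVol) (l := atTop)
    (F := fun c u => max (f u - c) 0) (f := fun _ => 0) (fun u => |f u|)
    (Eventually.of_forall fun c => (integrable_max_sub hf c).1)
    (by
      filter_upwards [eventually_ge_atTop 0] with c hc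
      refine Eventually.of_forall fun u => ?_
      rw [Real.norm_eq_abs, abs_of_nonneg (le_max_right _ _)]
      exact max_le (by linarith [le_abs_self (f u)]) (abs_nonneg _))
    hf.abs
    (Eventually.of_forall fun u => tendsto_const_nhds.congr' (by
      filter_upwards [eventually_ge_atTop (f u)] with c hc
      exact (max_eq_right (sub_nonpos.2 hc)).symm))
  rwa [integral_zero] at h

lemma excess_eq_excess_neg {f : ℝ → ℝ} (hf : Integrable f unitVol) (c : ℝ) :
    excess f c = (∫ u, f u ∂unitVol) - c + excess (fun u => -f u) (-c) := by
  have h : ∀ u, max (f u - c) 0 = f u - c + max (-f u - -c) 0 := fun u => by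
    rcases max_cases (f u - c) 0 with h1 | h1 <;> rcases max_cases (-f u - -c) 0 with h2 | h2 <;>
      linarith
  have hi : Integrable (fun u => f u - c) unitVol := hf.sub (integrable_const c)
  unfold excess
  rw [funext h, integral_add hi (integrable_max_sub (f := fun u => -f u) hf.neg (-c)),
    integral_sub hf (integrable_const c)]
  simp

/-- Where the gap between the excess functions of `y` and `x` is maximal, `x` has mass. -/
lemma exists_mass_of_excess_lt {x y : ℝ → ℝ} (hx : Integrable x unitVol)
    (hy : Integrable y unitVol) (hint : ∫ u, x u ∂unitVol = ∫ u, y u ∂unitVol) {c₀ : ℝ}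
    (h₀ : excess x c₀ < excess y c₀) :
    ∃ a ε η : ℝ, 0 < ε ∧ 0 < η ∧ (¬ ∀ᵐ u ∂unitVol, ε ≤ |x u - a|) ∧
      ∀ c, |c - a| ≤ 2 * ε → η ≤ excess y c - excess x c := by
  set g : ℝ → ℝ := fun c => excess y c - excess x c with hg
  have hgc : Continuous g := (continuous_excess hy).sub (continuous_excess hx)
  have htop : Tendsto g atTop (𝓝 0) := by
    simpa using (tendsto_excess_atTop hy).sub (tendsto_excess_atTop hx)
  have hbot : Tendsto g atBot (𝓝 0) := by
    have h := ((tendsto_excess_atTop hy.neg).sub (tendsto_excess_atTop hx.neg)).comp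
      tendsto_neg_atBot_atTop
    rw [sub_zero] at h
    refine h.congr fun c => ?_
    simp only [hg, Function.comp_apply]
    rw [excess_eq_excess_neg hx, excess_eq_excess_neg hy, hint]
    simp only [Pi.neg_def]
    ring
  have hg0 : 0 < g c₀ := sub_pos.2 h₀
  obtain ⟨m, hm⟩ := hgc.exists_forall_ge' c₀ (by
    rw [cocompact_eq_atBot_atTop, eventually_sup]
    exact ⟨(hbot.eventually (gt_mem_nhds hg0)).mono fun _ h => h.le,
      (htop.eventually (gt_mem_nhds hg0)).mono fun _ h => h.le⟩)
  have hmpos : 0 < g m := hg0.trans_le (hm c₀)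
  obtain ⟨B, hB⟩ := (htop.eventually (gt_mem_nhds hmpos)).exists_forall_of_atTop
  have hbdd : BddAbove {c | g c = g m} := ⟨B, fun c hc => by
    by_contra! h
    exact absurd (hB c h.le) (by rw [show g c = g m from hc]; exact lt_irrefl _)⟩
  set a := sSup {c | g c = g m} with ha
  have hga : g a = g m :=
    (isClosed_eq hgc continuous_const).csSup_mem ⟨m, rfl⟩ hbdd
  obtain ⟨r, hr, hball⟩ := Metric.eventually_nhds_iff.1
    (hgc.continuousAt.eventually (lt_mem_nhds (show g a / 2 < g a by linarith)))
  refine ⟨a, r / 3, g a / 2, by linarith, by linarith, fun hae => ?_, fun c hc => ?_⟩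
  · set ε := r / 3 with hε
    have hε0 : 0 < ε := by linarith
    have hxe : excess x (a + ε) + excess x (a - ε) = 2 * excess x a := by
      unfold excess
      rw [← integral_add (integrable_max_sub hx _) (integrable_max_sub hx _),
        ← integral_const_mul]
      refine integral_congr_ae ?_
      filter_upwards [hae] with u hu
      rcases le_abs.1 hu with h | h <;>
      rcases max_cases (x u - (a + ε)) 0 with h1 | h1 <;>
        rcases max_cases (x u - (a - ε)) 0 with h2 | h2 <;>
        rcases max_cases (x u - a) 0 with h3 | h3 <;> linarith
    have hye : 2 * excess y a ≤ excess y (a + ε) + excess y (a - ε) := by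
      unfold excess
      rw [← integral_add (integrable_max_sub hy _) (integrable_max_sub hy _),
        ← integral_const_mul]
      refine integral_mono ((integrable_max_sub hy _).const_mul 2)
        ((integrable_max_sub hy _).add (integrable_max_sub hy _)) fun u => ?_
      dsimp only
      rcases max_cases (y u - (a + ε)) 0 with h1 | h1 <;>
        rcases max_cases (y u - (a - ε)) 0 with h2 | h2 <;>
        rcases max_cases (y u - a) 0 with h3 | h3 <;> linarith
    have h1 : g (a - ε) ≤ g a := hga ▸ hm _
    have h2 : g (a + ε) < g a := by
      refine lt_of_le_of_ne (hga ▸ hm _) fun h => ?_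
      have := le_csSup hbdd (show a + ε ∈ {c | g c = g m} from h.trans hga)
      linarith
    simp only [hg] at h1 h2
    linarith
  · exact (hball (by rw [Real.dist_eq]; linarith)).le

lemma excess_add_le {x y d : ℝ → ℝ} (hx : Integrable x unitVol) (hd : Integrable d unitVol)
    (hd0 : ∫ u, d u ∂unitVol = 0) {a ε η δ : ℝ} (hε : 0 < ε) (hδε : δ ≤ ε) (hδη : δ ≤ η)
    (hdδ : ∀ u, |d u| ≤ δ) (hsupp : ∀ u, ε ≤ |x u - a| → d u = 0)
    (hle : ∀ c, excess x c ≤ excess y c)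
    (hgap : ∀ c, |c - a| ≤ 2 * ε → η ≤ excess y c - excess x c) (c : ℝ) :
    excess (fun u => x u + d u) c ≤ excess y c := by
  rcases le_or_gt |c - a| (2 * ε) with hc | hc
  · have h := abs_excess_sub_le (a := c) (b := c) (δ := δ) (hx.add hd) hx fun u => by
      simpa using hdδ u
    have := (abs_le.1 h).2
    have := hgap c hc
    change excess (x + d) c ≤ _
    linarith
  · obtain ⟨k, hk⟩ : ∃ k : ℝ, ∀ u, max (x u + d u - c) 0 = max (x u - c) 0 + k * d u := by
      rcases lt_abs.1 hc with h | h
      · refine ⟨0, fun u => ?_⟩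
        rcases le_or_gt ε |x u - a| with hu | hu
        · simp [hsupp u hu]
        · have h1 := abs_lt.1 hu
          have h2 := abs_le.1 (hdδ u)
          rw [max_eq_right (by linarith), max_eq_right (by linarith)]
          ring
      · refine ⟨1, fun u => ?_⟩
        rcases le_or_gt ε |x u - a| with hu | hu
        · simp [hsupp u hu]
        · have h1 := abs_lt.1 hu
          have h2 := abs_le.1 (hdδ u)
          rw [max_eq_left (by linarith), max_eq_left (by linarith)]
          ring
    refine le_trans (le_of_eq ?_) (hle c)
    unfold excess
    rw [funext hk, integral_add (integrable_max_sub hx c) (hd.const_mul k), integral_const_mul,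
      hd0, mul_zero, add_zero]

/-- An integrable function on `(0,1)` has mean zero after flipping its sign past some point. -/
lemma exists_sign_flip {w : ℝ → ℝ} (hw : Integrable w unitVol) :
    ∃ s : ℝ, Integrable (fun u => if u ≤ s then w u else -w u) unitVol ∧
      ∫ u, (if u ≤ s then w u else -w u) ∂unitVol = 0 := by
  have hii : IntervalIntegrable w volume 0 1 := by
    rw [intervalIntegrable_iff_integrableOn_Ioo_of_le zero_le_one]
    exact hw
  have hc : ContinuousOn (fun s => ∫ u in (0:ℝ)..s, w u) (Icc 0 1) := by
    have h := intervalIntegral.continuousOn_primitive_interval' hii left_mem_uIcc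
    rwa [uIcc_of_le zero_le_one] at h
  obtain ⟨s, hs, hs'⟩ : ∃ s ∈ Icc (0:ℝ) 1, ∫ u in (0:ℝ)..s, w u = (∫ u in (0:ℝ)..1, w u) / 2 := by
    have h1 := isPreconnected_Icc.intermediate_value (left_mem_Icc.2 zero_le_one)
      (right_mem_Icc.2 zero_le_one) hc
    have h2 := isPreconnected_Icc.intermediate_value (right_mem_Icc.2 zero_le_one)
      (left_mem_Icc.2 zero_le_one) hc
    simp only [intervalIntegral.integral_same] at h1 h2
    rcases le_total 0 (∫ u in (0:ℝ)..1, w u) with h | h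
    · exact h1 ⟨by linarith, by linarith⟩
    · exact h2 ⟨by linarith, by linarith⟩
  refine ⟨s, ?_⟩
  have h (u : ℝ) : (if u ≤ s then w u else -w u) = 2 * (Iic s).indicator w u - w u := by
    by_cases hu : u ≤ s
    · rw [if_pos hu, indicator_of_mem (mem_Iic.2 hu)]; ring
    · rw [if_neg hu, indicator_of_notMem (by simpa using hu)]; ring
  have hi := (hw.indicator (measurableSet_Iic (a := s))).const_mul 2
  rw [funext h]
  refine ⟨hi.sub hw, ?_⟩
  rw [integral_sub hi hw, integral_const_mul,
    integral_indicator measurableSet_Iic]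
  have e : ∫ u in Iic s, w u ∂unitVol = ∫ u in (0:ℝ)..s, w u := by
    rw [intervalIntegral.integral_of_le hs.1, unitVol, restrict_Ioo_eq_restrict_Ioc,
      Measure.restrict_restrict measurableSet_Iic]
    congr 2
    ext u
    simp only [mem_inter_iff, mem_Iic, mem_Ioc]
    exact ⟨fun h => ⟨h.2.1, h.1⟩, fun h => ⟨h.2, h.1, h.2.trans hs.2⟩⟩
  have e1 : ∫ u, w u ∂unitVol = ∫ u in (0:ℝ)..1, w u := by
    rw [intervalIntegral.integral_of_le zero_le_one, unitVol, restrict_Ioo_eq_restrict_Ioc]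
  rw [e, hs', e1]
  ring

lemma mem_Omega_iff {x y : ℝ → ℝ} (hy : Integrable y unitVol) :
    x ∈ Omega y ↔ Integrable x unitVol ∧ (∀ c, excess x c ≤ excess y c) ∧
      ∫ u, x u ∂unitVol = ∫ u, y u ∂unitVol :=
  and_congr_right fun hx => maj_iff_excess_le hy hx

lemma ExtremePt.excess_eq {x y : ℝ → ℝ} (hy : Integrable y unitVol) (h : ExtremePt (Omega y) x)
    (c₀ : ℝ) : excess x c₀ = excess y c₀ := by
  obtain ⟨hx, hle, hint⟩ := (mem_Omega_iff hy).1 h.1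
  by_contra hne
  obtain ⟨a, ε, η, hε, hη, hmass, hgap⟩ :=
    exists_mass_of_excess_lt hx hy hint (lt_of_le_of_ne (hle c₀) hne)
  set δ := min ε η with hδ
  have hδ0 : 0 < δ := lt_min hε hη
  set w : ℝ → ℝ := fun u => {v | |v - a| < ε}.indicator (fun _ => δ) (x u) with hwdef
  have hwm : AEStronglyMeasurable w unitVol :=
    ((measurable_const.indicator
      (measurableSet_lt (by fun_prop) measurable_const)).comp_aemeasurable hx.aemeasurable).aestronglyMeasurable
  have hwδ (u : ℝ) : |w u| ≤ δ := by
    simp only [hwdef, indicator]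
    split_ifs
    · rw [abs_of_pos hδ0]
    · simpa using hδ0.le
  have hwi : Integrable w unitVol :=
    .of_bound hwm δ (Eventually.of_forall hwδ)
  obtain ⟨s, hdi, hs⟩ := exists_sign_flip hwi
  set d : ℝ → ℝ := fun u => if u ≤ s then w u else -w u with hddef
  have hdabs (u : ℝ) : |d u| = |w u| := by
    simp only [hddef]
    split_ifs
    · rfl
    · rw [abs_neg]
  have hdδ (u : ℝ) : |d u| ≤ δ := (hdabs u).trans_le (hwδ u)
  have hsupp (u : ℝ) (hu : ε ≤ |x u - a|) : d u = 0 := by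
    rw [← abs_eq_zero, hdabs, abs_eq_zero]
    exact indicator_of_notMem (s := {v | |v - a| < ε}) (not_lt.2 hu) _
  have hmem₁ : (fun u => x u + d u) ∈ Omega y := (mem_Omega_iff hy).2 ⟨hx.add hdi,
    excess_add_le hx hdi hs hε (min_le_left _ _) (min_le_right _ _) hdδ hsupp hle hgap,
    by rw [integral_add hx hdi, hs, add_zero, hint]⟩
  have hdi' : Integrable (fun u => -d u) unitVol := hdi.neg
  have hs' : ∫ u, -d u ∂unitVol = 0 := by rw [integral_neg, hs, neg_zero]
  have hmem₂ : (fun u => x u + -d u) ∈ Omega y := (mem_Omega_iff hy).2 ⟨hx.add hdi.neg,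
    excess_add_le hx hdi' hs' hε (min_le_left _ _) (min_le_right _ _)
      (fun u => (abs_neg (d u)).trans_le (hdδ u)) (fun u hu => by simp [hsupp u hu]) hle hgap,
    by rw [integral_add hx hdi', hs', add_zero, hint]⟩
  refine hmass ?_
  filter_upwards [h.2 _ hmem₁ _ hmem₂ (Eventually.of_forall fun u => by ring)] with u hu
  by_contra! hlt
  have hw0 : |w u| = 0 := by rw [← hdabs, abs_eq_zero]; linarith
  have hwu : w u = δ := indicator_of_mem (s := {v | |v - a| < ε}) hlt _
  rw [hwu, abs_of_pos hδ0] at hw0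
  exact hδ0.ne' hw0

theorem extreme_iff_equimeasurable_atomless (y : ℝ → ℝ)
    (hy : IntegrableOn y (Ioo (0:ℝ) 1)) (x : ℝ → ℝ) (hx : x ∈ Omega y) :
    ExtremePt (Omega y) x ↔ ∀ t ∈ Ico (0:ℝ) 1, rr x t = rr y t := by
  refine ⟨fun h t ht => rr_eq_of_excess_eq hx.1 hy (h.excess_eq hy) ht.1,
    fun h => ⟨hx, fun x₁ h₁ x₂ h₂ hm => ?_⟩⟩
  have he := excess_eq_of_rr_eq hx.1.aemeasurable hy.aemeasurable
    fun t ht => h t (Ioo_subset_Ico_self ht)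
  obtain ⟨i₁, e₁, -⟩ := (mem_Omega_iff hy).1 h₁
  obtain ⟨i₂, e₂, -⟩ := (mem_Omega_iff hy).1 h₂
  exact ae_eq_of_midpoint hx.1 i₁ i₂ hm (fun c => (e₁ c).trans_eq (he c).symm)
    (fun c => (e₂ c).trans_eq (he c).symm)
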